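/- arXiv:1708.03038 — 2 statements merged into one kernel-verified Lean document; each statement's English description precedes it below -/
import Mathlib

section
/- Let x be a self-adjoint nilpotent endomorphism of V and let a ≥ 1 be an integer. Then for v, v′ ∈ W_a the value (v, v′)_a = B(u, v′) is independent of the choice of u with x^{a−1} u = v; the map (·,·)_a is a symmetric bilinear form on W_a; and its radical {v ∈ W_a : (v, v′)_a = 0 for all v′ ∈ W_a} equals ker(x) ∩ im(x^a). In particular, (·,·)_a induces a nondegenerate symmetric bilinear form on W_a / (ker(x) ∩ im(x^a)). (The form of 8.3 on W^i/W^{i−1}.) -/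
/-!
Everything rests on moving powers of `x` across `B`: if `x ^ (a - 1) u = v` and
`x ^ (a - 1) u'' = v'`, then `B u v' = B v u''`. The left side does not involve `u''` and the right
side does not involve `u`, so the value depends only on `v` and `v'`; symmetry of `B` then gives
symmetry of the form. As `v'` runs over `W_a`, the vector `u''` runs over `ker (x ^ a)`, so `v` is
in the radical exactly when it is orthogonal to `ker (x ^ a)`. For a self-adjoint `y` on a
finite-dimensional space with nondegenerate form, `(ker y)ᗮ = range y`
(`mem_range_of_forall_ker`), and with `y = x ^ a` this is the description of the radical.
-/

/-- `x` is self-adjoint with respect to the bilinear form `B`. -/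
def IsSelfAdjWrt {k V : Type*} [Field k] [AddCommGroup V] [Module k V]
    (B : V →ₗ[k] V →ₗ[k] k) (x : Module.End k V) : Prop :=
  ∀ v w : V, B (x v) w = B v (x w)

theorem IsSelfAdjWrt.pow {k V : Type*} [Field k] [AddCommGroup V] [Module k V]
    {B : V →ₗ[k] V →ₗ[k] k} {x : Module.End k V} (h : IsSelfAdjWrt B x) (n : ℕ) :
    IsSelfAdjWrt B (x ^ n) := by
  induction n with
  | zero => intro v w; simp
  | succ n ih =>
    intro v w
    rw [pow_succ, Module.End.mul_apply, ih, h, ← Module.End.mul_apply, ← pow_succ', ← pow_succ]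

/-- The inclusion `(ker y)ᗮ ≤ range y`: a functional separating `v` from `range y` has the form
`B z`, and self-adjointness puts `z` in `ker y`. -/
theorem mem_range_of_forall_ker {k V : Type*} [Field k] [AddCommGroup V] [Module k V]
    [FiniteDimensional k V] {B : V →ₗ[k] V →ₗ[k] k}
    (hsymm : ∀ v w : V, B v w = B w v)
    (hnd : ∀ v : V, (∀ w : V, B v w = 0) → v = 0)
    {y : Module.End k V} (hy : IsSelfAdjWrt B y) {v : V}
    (hv : ∀ z, y z = 0 → B v z = 0) : v ∈ LinearMap.range y := by
  by_contra hmem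
  obtain ⟨f, hfv, hf⟩ := Submodule.exists_le_ker_of_notMem hmem
  have hinj : Function.Injective B := by
    rw [injective_iff_map_eq_zero]
    intro z hz
    exact hnd z fun w => by simp [hz]
  -- The dual space has the same dimension as `V`, so the injective map `B` is onto it.
  have hsurj : Function.Surjective B :=
    (LinearMap.injective_iff_surjective_of_finrank_eq_finrank
      (Subspace.dual_finrank_eq (K := k) (V := V)).symm).1 hinj
  obtain ⟨z, rfl⟩ := hsurj f
  refine hfv ?_
  rw [hsymm]
  refine hv z (hnd _ fun w => ?_)
  rw [hy]
  exact hf (LinearMap.mem_range_self y w)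

/-- The form of 8.3: for a self-adjoint nilpotent `x` and `a ≥ 1`, on
`W_a = ker x ∩ im (x^{a-1})` the rule `(v, v')_a = B u v'` (where `x^{a-1} u = v`)
is independent of the choice of `u`, symmetric, and its radical is
`ker x ∩ im (x^a)`. -/
theorem form_on_Wa_wellDefined_symm_radical
    {k V : Type*} [Field k] [IsAlgClosed k] [AddCommGroup V] [Module k V]
    [FiniteDimensional k V] (hchar : (2 : k) ≠ 0)
    (N : ℕ) (hN : 1 ≤ N) (hdim : Module.finrank k V = N)
    (B : V →ₗ[k] V →ₗ[k] k)
    (hsymm : ∀ v w : V, B v w = B w v)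
    (hnd : ∀ v : V, (∀ w : V, B v w = 0) → v = 0)
    (x : Module.End k V) (hnil : IsNilpotent x) (hsa : IsSelfAdjWrt B x)
    (a : ℕ) (ha : 1 ≤ a) :
    -- independence of the choice of `u`
    (∀ v v' u u' u'' : V, x v = 0 → x v' = 0 →
      (x ^ (a - 1)) u = v → (x ^ (a - 1)) u' = v → (x ^ (a - 1)) u'' = v' →
      B u v' = B u' v') ∧
    -- symmetry
    (∀ v v' u u' : V, x v = 0 → x v' = 0 →
      (x ^ (a - 1)) u = v → (x ^ (a - 1)) u' = v' →
      B u v' = B u' v) ∧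
    -- the radical of the form on `W_a` is `ker x ∩ im (x^a)`
    (∀ v u : V, x v = 0 → (x ^ (a - 1)) u = v →
      ((∀ v' u'' : V, x v' = 0 → (x ^ (a - 1)) u'' = v' → B u v' = 0) ↔
        v ∈ LinearMap.ker x ⊓ LinearMap.range (x ^ a))) := by
  have hp := hsa.pow (a - 1)
  have hxa : x ^ a = x * x ^ (a - 1) := by rw [← pow_succ', Nat.sub_add_cancel ha]
  refine ⟨?_, ?_, ?_⟩
  · rintro v v' u u' u'' - - hu hu' rfl
    rw [← hp, ← hp, hu, hu']
  · rintro v v' u u' - - rfl rfl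
    rw [← hp, hsymm]
  · intro v u hv hu
    constructor
    · intro h
      refine ⟨hv, mem_range_of_forall_ker hsymm hnd (hsa.pow a) fun z hz => ?_⟩
      rw [← hu, hp]
      exact h _ z (by rwa [hxa, Module.End.mul_apply] at hz) rfl
    · rintro ⟨-, w, hw⟩ v' u'' hv' rfl
      rw [← hp, hu, ← hw, hsa.pow a, hxa, Module.End.mul_apply, hv', map_zero]
end

section
/- Let x be a self-adjoint nilpotent endomorphism of V, let a ≥ 1, and let v, w ∈ W_a be vectors with (v, v)_a ≠ 0 and (w, w)_a ≠ 0. Then there exists an isometry g of (V, B) such that g ∘ x = x ∘ g and g(v) is a nonzero scalar multiple of w. In particular, the group of isometries of (V, B) commuting with x acts transitively on the set of lines ⟨v⟩ with v ∈ W_a and (v, v)_a ≠ 0. (Claim (8.11.1) in the proof of Lemma 8.11 (i).) -/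
/-- `g` is an isometry of `(V, B)`. -/
def IsIsometryWrt {k V : Type*} [Field k] [AddCommGroup V] [Module k V]
    (B : V →ₗ[k] V →ₗ[k] k) (g : V ≃ₗ[k] V) : Prop :=
  ∀ v w : V, B (g v) (g w) = B v w

open Polynomial in
/-- The `x`-stable subspace `k[x] d` generated by `d`. -/
noncomputable def cyclicSubspace {k V : Type*} [Field k] [AddCommGroup V] [Module k V]
    (x : Module.End k V) (d : V) : Submodule k V :=
  LinearMap.range ((LinearMap.applyₗ d).comp (aeval (R := k) x).toLinearMap)

section

open Polynomial

variable {k V : Type*} [Field k] [AddCommGroup V] [Module k V]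
  {B : V →ₗ[k] V →ₗ[k] k} {x : Module.End k V}

theorem mem_cyclicSubspace {d z : V} :
    z ∈ cyclicSubspace x d ↔ ∃ p : k[X], aeval x p d = z := by
  simp [cyclicSubspace]

theorem self_adjoint_pow (hsa : IsSelfAdjWrt B x) (n : ℕ) (v w : V) :
    B ((x ^ n) v) w = B v ((x ^ n) w) := by
  induction n generalizing v w with
  | zero => simp
  | succ n ih => rw [pow_succ, Module.End.mul_apply, ih, hsa, ← Module.End.mul_apply, ← pow_succ',
      pow_succ]

/-- A vector of `ker x` pairs with `p(x) d` through the constant term of `p` only. -/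
theorem form_ker_aeval (hsa : IsSelfAdjWrt B x) {y d : V} (hy : x y = 0) (p : k[X]) :
    B y (aeval x p d) = p.coeff 0 * B y d := by
  conv_lhs => rw [← X_mul_divX_add p]
  rw [map_add, map_mul, aeval_X, aeval_C, LinearMap.add_apply, Module.End.mul_apply, map_add,
    ← hsa, hy]
  simp

/-- The restriction of `B` to `k[x] d` has trivial radical: if `p(x) d` is orthogonal to all
`x ^ j d`, then the coefficients of `p` below degree `a` vanish one after the other. -/
theorem cyclicSubspace_disjoint (hsymm : ∀ v w : V, B v w = B w v)
    (hsa : IsSelfAdjWrt B x) {m : ℕ} {d : V}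
    (hd : x ((x ^ m) d) = 0) (hde : B d ((x ^ m) d) ≠ 0) {z : V}
    (hz : z ∈ cyclicSubspace x d) (hz' : ∀ y ∈ cyclicSubspace x d, B y z = 0) : z = 0 := by
  obtain ⟨p, rfl⟩ := mem_cyclicSubspace.1 hz
  have key : ∀ n ≤ m + 1, X ^ n ∣ p := by
    intro n
    induction n with
    | zero => simp
    | succ n ih =>
      intro hn
      obtain ⟨q, rfl⟩ := ih (by omega)
      -- pairing with `x ^ (m - n) d` isolates the constant term of `q`
      have h1 := hz' ((x ^ (m - n)) d) (mem_cyclicSubspace.2 ⟨X ^ (m - n), by simp⟩)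
      have h2 : B ((x ^ m) d) (aeval x q d) = 0 := by
        rw [← h1, map_mul, Module.End.mul_apply, map_pow, aeval_X, ← self_adjoint_pow hsa,
          ← Module.End.mul_apply, ← pow_add]
        congr 4
        omega
      rw [form_ker_aeval hsa hd, hsymm] at h2
      have h3 : X ∣ q := X_dvd_iff.2 ((mul_eq_zero.1 h2).resolve_right hde)
      rw [pow_succ]
      exact mul_dvd_mul_left _ h3
  obtain ⟨q, rfl⟩ := key (m + 1) le_rfl
  rw [mul_comm, map_mul, Module.End.mul_apply, map_pow, aeval_X, pow_succ',
    Module.End.mul_apply, hd, map_zero]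

/-- The isometry acting as `-1` on `k[x] d` and as `+1` on its orthogonal complement, together
with its effect on `ker x`. Here `x ^ m d` spans the socle of `k[x] d`. -/
theorem exists_cyclic_reflection [FiniteDimensional k V]
    (hsymm : ∀ v w : V, B v w = B w v)
    (hsa : IsSelfAdjWrt B x) {m : ℕ} {d : V}
    (hd : x ((x ^ m) d) = 0) (hde : B d ((x ^ m) d) ≠ 0) :
    ∃ g : V ≃ₗ[k] V, IsIsometryWrt B g ∧ (∀ z : V, g (x z) = x (g z)) ∧
      ∀ z : V, x z = 0 → g z = z - (2 * (B d z / B d ((x ^ m) d))) • (x ^ m) d := by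
  set M := cyclicSubspace x d
  have hdisj : ∀ z ∈ M, (∀ y ∈ M, B y z = 0) → z = 0 := fun z hz hz' =>
    cyclicSubspace_disjoint hsymm hsa hd hde hz hz'
  have hMx : ∀ z ∈ M, x z ∈ M := by
    intro z hz
    obtain ⟨p, rfl⟩ := mem_cyclicSubspace.1 hz
    exact mem_cyclicSubspace.2 ⟨X * p, by simp⟩
  have hrefl : LinearMap.IsRefl B := fun v w h => by rw [hsymm, h]
  have hcompl : IsCompl M (LinearMap.BilinForm.orthogonal B M) := by
    rw [LinearMap.BilinForm.isCompl_orthogonal_iff_disjoint hrefl, Submodule.disjoint_def]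
    exact fun z hz hz' => hdisj z hz fun y hy => hz' y hy
  obtain ⟨P, hPM, hPo⟩ : ∃ P : V →ₗ[k] V, (∀ z, P z ∈ M) ∧ ∀ z, ∀ y ∈ M, B y (z - P z) = 0 := by
    refine ⟨M.projection _ hcompl, fun z => by simp, fun z => ?_⟩
    have h : z - M.projection _ hcompl z ∈ LinearMap.BilinForm.orthogonal B M := by
      rw [← Submodule.projection_apply_eq_zero_iff hcompl, map_sub,
        Submodule.projection_apply_of_mem_left hcompl (Submodule.projection_apply_mem hcompl z),
        sub_self]
    exact h
  have huniq : ∀ z y, y ∈ M → (∀ t ∈ M, B t (z - y) = 0) → P z = y := by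
    intro z y hy h
    refine sub_eq_zero.1 (hdisj _ (M.sub_mem (hPM z) hy) fun t ht => ?_)
    have h1 := hPo z t ht
    have h2 := h t ht
    simp only [map_sub] at h1 h2 ⊢
    linear_combination h2 - h1
  have hPP : ∀ z, P (P z) = P z := fun z => huniq _ _ (hPM z) (by simp)
  have hPx : ∀ z, P (x z) = x (P z) := fun z =>
    huniq _ _ (hMx _ (hPM z)) fun t ht => by rw [← map_sub, ← hsa, hPo z _ (hMx t ht)]
  have hinv : Function.Involutive (LinearMap.id - (2 : k) • P : V →ₗ[k] V) := by
    intro z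
    simp only [LinearMap.sub_apply, LinearMap.id_apply, LinearMap.smul_apply, map_sub, map_smul,
      hPP]
    module
  refine ⟨LinearEquiv.ofInvolutive _ hinv, ?_, ?_, ?_⟩
  · intro v w
    have h1 := hPo w _ (hPM v)
    have h2 := hPo v _ (hPM w)
    rw [hsymm] at h2
    simp only [LinearEquiv.coe_ofInvolutive, LinearMap.sub_apply, LinearMap.id_apply,
      LinearMap.smul_apply, map_sub, map_smul, smul_eq_mul] at h1 h2 ⊢
    linear_combination (-2) * h1 - 2 * h2
  · intro z
    simp [hPx]
  · intro z hz
    have hPz : P z = (B d z / B d ((x ^ m) d)) • (x ^ m) d := by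
      refine huniq _ _ (M.smul_mem _ (mem_cyclicSubspace.2 ⟨X ^ m, by simp⟩)) fun t ht => ?_
      obtain ⟨p, rfl⟩ := mem_cyclicSubspace.1 ht
      rw [hsymm, form_ker_aeval hsa (by simp [hz, hd]), hsymm, map_sub, map_smul, smul_eq_mul,
        div_mul_cancel₀ _ hde, sub_self, mul_zero]
    simp [hPz, smul_smul]

/-- If `v` and `w` have the same nonzero norm `(v, v)_a = (w, w)_a` and `v - w` is anisotropic,
the reflection attached to `u₁ - u₂` carries `v` to `w`. -/
theorem exists_isometry_of_anisotropic_sub [FiniteDimensional k V]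
    (hsymm : ∀ v w : V, B v w = B w v)
    (hsa : IsSelfAdjWrt B x) {m : ℕ} {u₁ u₂ : V}
    (hv : x ((x ^ m) u₁) = 0) (hw : x ((x ^ m) u₂) = 0)
    (heq : B u₁ ((x ^ m) u₁) = B u₂ ((x ^ m) u₂))
    (hne : B (u₁ - u₂) ((x ^ m) (u₁ - u₂)) ≠ 0) :
    ∃ g : V ≃ₗ[k] V, IsIsometryWrt B g ∧ (∀ z : V, g (x z) = x (g z)) ∧
      g ((x ^ m) u₁) = (x ^ m) u₂ := by
  obtain ⟨g, hg, hgx, hgk⟩ := exists_cyclic_reflection hsymm hsa (by simp [hv, hw]) hne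
  refine ⟨g, hg, hgx, ?_⟩
  have h12 : B u₁ ((x ^ m) u₂) = B u₂ ((x ^ m) u₁) := by
    rw [hsymm, self_adjoint_pow hsa]
  have h : 2 * (B (u₁ - u₂) ((x ^ m) u₁) / B (u₁ - u₂) ((x ^ m) (u₁ - u₂))) = 1 := by
    rw [← mul_div_assoc, div_eq_one_iff_eq hne]
    simp only [map_sub, LinearMap.sub_apply]
    linear_combination heq + h12
  rw [hgk _ hv, h]
  simp

end

/-- Claim (8.11.1) in the proof of Lemma 8.11 (i): if `v, w ∈ W_a = ker x ∩ im (x^{a-1})`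
satisfy `(v,v)_a ≠ 0` and `(w,w)_a ≠ 0` (witnessed by `u₁, u₂`), then some isometry of
`(V, B)` commuting with `x` carries `v` to a nonzero scalar multiple of `w`. -/
theorem isometry_commuting_carries_anisotropic_line
    {k V : Type*} [Field k] [IsAlgClosed k] [AddCommGroup V] [Module k V]
    [FiniteDimensional k V] (hchar : (2 : k) ≠ 0)
    (N : ℕ) (hN : 1 ≤ N) (hdim : Module.finrank k V = N)
    (B : V →ₗ[k] V →ₗ[k] k)
    (hsymm : ∀ v w : V, B v w = B w v)
    (hnd : ∀ v : V, (∀ w : V, B v w = 0) → v = 0)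
    (x : Module.End k V) (hnil : IsNilpotent x) (hsa : IsSelfAdjWrt B x)
    (a : ℕ) (ha : 1 ≤ a) (v w u₁ u₂ : V)
    (hv : x v = 0) (hw : x w = 0)
    (hu₁ : (x ^ (a - 1)) u₁ = v) (hu₂ : (x ^ (a - 1)) u₂ = w)
    (hform₁ : B u₁ v ≠ 0) (hform₂ : B u₂ w ≠ 0) :
    ∃ g : V ≃ₗ[k] V, IsIsometryWrt B g ∧ (∀ z : V, g (x z) = x (g z)) ∧
      ∃ c : k, c ≠ 0 ∧ g v = c • w := by
  subst hu₁ hu₂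
  -- rescale `u₂` so that both vectors have the same norm
  obtain ⟨c, hc⟩ := IsAlgClosed.exists_pow_nat_eq
    (B u₁ ((x ^ (a - 1)) u₁) / B u₂ ((x ^ (a - 1)) u₂)) (n := 2) two_pos
  rw [eq_div_iff hform₂] at hc
  have hc0 : c ≠ 0 := by
    rintro rfl
    exact hform₁ (by rw [← hc]; ring)
  have main : ∀ c' : k, c' ^ 2 = c ^ 2 → c' ≠ 0 →
      B (u₁ - c' • u₂) ((x ^ (a - 1)) (u₁ - c' • u₂)) ≠ 0 →
      ∃ g : V ≃ₗ[k] V, IsIsometryWrt B g ∧ (∀ z : V, g (x z) = x (g z)) ∧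
        ∃ c : k, c ≠ 0 ∧ g ((x ^ (a - 1)) u₁) = c • (x ^ (a - 1)) u₂ := by
    intro c' hc' hc'0 hne
    obtain ⟨g, hg, hgx, hgv⟩ := exists_isometry_of_anisotropic_sub hsymm hsa
      (u₁ := u₁) (u₂ := c' • u₂) hv (by simp [hw])
      (by simp only [map_smul, LinearMap.smul_apply, smul_eq_mul]
          rw [← hc, ← hc']; ring) hne
    exact ⟨g, hg, hgx, c', hc'0, by rw [hgv, map_smul]⟩
  by_cases h1 : B (u₁ - c • u₂) ((x ^ (a - 1)) (u₁ - c • u₂)) = 0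
  · refine main (-c) (by ring) (neg_ne_zero.2 hc0) fun h2 => ?_
    -- the parallelogram identity rules out that both `v - c w` and `v + c w` are isotropic
    refine mul_ne_zero (mul_ne_zero hchar hchar) hform₁ ?_
    simp only [map_sub, map_smul, map_neg, neg_smul, LinearMap.sub_apply, LinearMap.smul_apply,
      LinearMap.neg_apply, smul_eq_mul] at h1 h2
    linear_combination h1 + h2 - 2 * hc
  · exact main c rfl hc0 h1
end
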